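/- Let m ≥ 2 and σ_2, …, σ_m ∈ ℝ, let κ : ℝ[X] → ℝ[Y] be the linear map with κ(1) = κ(X) = 0, κ(X^p) = σ_p Y for 2 ≤ p ≤ m and κ(X^p) = 0 for p > m, and let W = (exp_∗(−κ) ⊗ id)Δ be the associated Wick map. Then for every n ≥ 2, W(X^n) = B_n(X, −σ_2 Y, …, −σ_n Y), i.e. W(X^n) = n! Σ_{j_1,…,j_n ≥ 0, j_1+2j_2+⋯+nj_n = n} (X^{j_1}/j_1!) ∏_{p=2}^n (1/j_p!)(−σ_p Y/p!)^{j_p}, where σ_p = 0 for p > m and B_n is the n-th complete exponential Bell polynomial. -/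

import Mathlib

open Polynomial

/- `ℝ[X,Y]` is realised as `MvPolynomial (Fin 2) ℝ`, identifying `ℝ[Y] ⊗ ℝ[X]` with
`ℝ[X,Y]`, with `X := MvPolynomial.X 0` and `Y := MvPolynomial.X 1`. -/

/-- The variable `X` of `ℝ[X,Y]`. -/
noncomputable def Xv : MvPolynomial (Fin 2) ℝ := MvPolynomial.X 0

/-- The variable `Y` of `ℝ[X,Y]`. -/
noncomputable def Yv : MvPolynomial (Fin 2) ℝ := MvPolynomial.X 1

/-- The `ℝ[X,Y]`-valued convolution product of linear maps `ℝ[X] → ℝ[X,Y]`,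
determined on the monomial basis by `(φ∗ψ)(X^n) = Σ_{k=0}^n (n choose k) φ(X^k)ψ(X^{n−k})`. -/
noncomputable def convA (φ ψ : Polynomial ℝ →ₗ[ℝ] MvPolynomial (Fin 2) ℝ) :
    Polynomial ℝ →ₗ[ℝ] MvPolynomial (Fin 2) ℝ :=
  (Polynomial.basisMonomials ℝ).constr ℝ fun n =>
    ∑ k ∈ Finset.range (n + 1), (n.choose k : ℝ) • (φ (X ^ k) * ψ (X ^ (n - k)))

/-- The unit of the convolution algebra: `X^n ↦ δ_{n,0}·1`. -/
noncomputable def counitA : Polynomial ℝ →ₗ[ℝ] MvPolynomial (Fin 2) ℝ :=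
  (Algebra.linearMap ℝ (MvPolynomial (Fin 2) ℝ)).comp (Polynomial.lcoeff ℝ 0)

/-- The `k`-fold convolution power `θ^{∗k}`, with `θ^{∗0}` the convolution unit. -/
noncomputable def convPowA (φ : Polynomial ℝ →ₗ[ℝ] MvPolynomial (Fin 2) ℝ) :
    ℕ → (Polynomial ℝ →ₗ[ℝ] MvPolynomial (Fin 2) ℝ)
  | 0 => counitA
  | k + 1 => convA φ (convPowA φ k)

/-- The convolution exponential `exp_∗(θ) = Σ_{k≥0} θ^{∗k}/k!`, a finite sum on each
`X^n` when `θ(1) = 0`. -/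
noncomputable def expStarA (φ : Polynomial ℝ →ₗ[ℝ] MvPolynomial (Fin 2) ℝ) :
    Polynomial ℝ →ₗ[ℝ] MvPolynomial (Fin 2) ℝ :=
  (Polynomial.basisMonomials ℝ).constr ℝ fun n =>
    ∑ k ∈ Finset.range (n + 1), ((k.factorial : ℝ))⁻¹ • convPowA φ k (X ^ n)

/-- The index set of the complete Bell polynomial: tuples `(j_1,…,j_n)` of nonnegative
integers with `j_1 + 2j_2 + ⋯ + nj_n = n`, encoded as `j : Fin n → ℕ` where `j i`
stands for `j_{i+1}`. -/
noncomputable def bellIdx (n : ℕ) : Finset (Fin n → ℕ) :=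
  (Fintype.piFinset fun _ => Finset.range (n + 1)).filter fun j =>
    ∑ i : Fin n, ((i : ℕ) + 1) * j i = n

noncomputable section WickAux

/-- Exponential generating series of a linear map. -/
def egs (φ : Polynomial ℝ →ₗ[ℝ] MvPolynomial (Fin 2) ℝ) : PowerSeries (MvPolynomial (Fin 2) ℝ) :=
  PowerSeries.mk fun n => ((n.factorial : ℝ))⁻¹ • φ (X ^ n)

lemma constr_X_pow (f : ℕ → MvPolynomial (Fin 2) ℝ) (n : ℕ) :
    ((Polynomial.basisMonomials ℝ).constr ℝ f) (X ^ n) = f n := by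
  have h : (X ^ n : Polynomial ℝ) = Polynomial.basisMonomials ℝ n := by
    simp [Polynomial.coe_basisMonomials, Polynomial.X_pow_eq_monomial]
  rw [h, Module.Basis.constr_basis]

lemma egs_conv (φ ψ : Polynomial ℝ →ₗ[ℝ] MvPolynomial (Fin 2) ℝ) :
    egs (convA φ ψ) = egs φ * egs ψ := by
  ext1 n
  rw [PowerSeries.coeff_mul, Finset.Nat.sum_antidiagonal_eq_sum_range_succ_mk]
  simp only [egs, PowerSeries.coeff_mk, convA, constr_X_pow, Finset.smul_sum]
  refine Finset.sum_congr rfl fun k hk => ?_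
  have hk' : k ≤ n := by simpa [Nat.lt_succ_iff] using hk
  rw [smul_smul, smul_mul_smul_comm, Nat.cast_choose ℝ hk']
  congr 1
  have := Nat.factorial_ne_zero n
  have := Nat.factorial_ne_zero k
  have := Nat.factorial_ne_zero (n-k)
  field_simp

lemma egs_pow (φ : Polynomial ℝ →ₗ[ℝ] MvPolynomial (Fin 2) ℝ) (k : ℕ) :
    egs (convPowA φ k) = egs φ ^ k := by
  induction k with
  | zero =>
    ext1 n
    rw [pow_zero, PowerSeries.coeff_one]
    simp only [egs, PowerSeries.coeff_mk, convPowA, counitA]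
    by_cases h : n = 0
    · subst h; simp
    · simp [h, Polynomial.coeff_X_pow, Ne.symm h]
  | succ k ih => rw [convPowA, egs_conv, ih, pow_succ']

lemma expStar_coeff (φ : Polynomial ℝ →ₗ[ℝ] MvPolynomial (Fin 2) ℝ) (n : ℕ) :
    expStarA φ (X ^ n) = (n.factorial : ℝ) •
      ∑ l ∈ Finset.range (n + 1), ((l.factorial : ℝ))⁻¹ • PowerSeries.coeff n (egs φ ^ l) := by
  rw [expStarA, constr_X_pow, Finset.smul_sum]
  refine Finset.sum_congr rfl fun k _ => ?_
  rw [← egs_pow, egs, PowerSeries.coeff_mk, smul_smul, smul_smul]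
  congr 1
  have := Nat.factorial_ne_zero n
  field_simp

lemma wick_lhs (φ : Polynomial ℝ →ₗ[ℝ] MvPolynomial (Fin 2) ℝ) (n : ℕ) :
    ∑ k ∈ Finset.range (n + 1), (n.choose k : ℝ) • (expStarA φ (X ^ k) * Xv ^ (n - k)) =
    (n.factorial : ℝ) • ∑ s ∈ Finset.range (n + 1), ((s.factorial : ℝ))⁻¹ •
      PowerSeries.coeff n ((egs φ + PowerSeries.C Xv * PowerSeries.X) ^ s) := by
  have h1 : ∀ s ∈ Finset.range (n + 1), ((s.factorial : ℝ))⁻¹ •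
      PowerSeries.coeff n ((egs φ + PowerSeries.C Xv * PowerSeries.X) ^ s) =
      ∑ l ∈ Finset.range (s + 1), ((l.factorial : ℝ)⁻¹ * ((s - l).factorial : ℝ)⁻¹) •
        (PowerSeries.coeff (n - (s - l)) (egs φ ^ l) * Xv ^ (s - l)) := by
    intro s hs
    have hs' : s ≤ n := by simpa [Nat.lt_succ_iff] using hs
    rw [add_pow, map_sum, Finset.smul_sum]
    refine Finset.sum_congr rfl fun l hl => ?_
    have hl' : l ≤ s := by simpa [Nat.lt_succ_iff] using hl
    have e : egs φ ^ l * (PowerSeries.C Xv * PowerSeries.X) ^ (s - l) * (s.choose l : PowerSeries (MvPolynomial (Fin 2) ℝ))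
      = PowerSeries.C ((s.choose l : MvPolynomial (Fin 2) ℝ) * Xv ^ (s - l)) * (egs φ ^ l * PowerSeries.X ^ (s - l)) := by
      rw [map_mul, map_pow, map_natCast]; ring
    rw [e, PowerSeries.coeff_C_mul, PowerSeries.coeff_mul_X_pow', if_pos (by omega)]
    have e2 : (s.choose l : MvPolynomial (Fin 2) ℝ) = algebraMap ℝ _ (s.choose l : ℝ) := by simp
    rw [e2, mul_assoc, ← Algebra.smul_def, smul_smul, Nat.cast_choose ℝ hl', mul_comm (Xv ^ _)]
    congr 1
    have := Nat.factorial_ne_zero s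
    have := Nat.factorial_ne_zero l
    have := Nat.factorial_ne_zero (s - l)
    field_simp
  rw [Finset.sum_congr rfl h1]
  have h2 : ∀ k ∈ Finset.range (n + 1),
      (n.choose k : ℝ) • (expStarA φ (X ^ k) * Xv ^ (n - k)) =
      ∑ l ∈ Finset.range (k + 1), (n.factorial : ℝ) •
        (((l.factorial : ℝ)⁻¹ * ((n - k).factorial : ℝ)⁻¹) •
        (PowerSeries.coeff k (egs φ ^ l) * Xv ^ (n - k))) := by
    intro k hk
    have hk' : k ≤ n := by simpa [Nat.lt_succ_iff] using hk
    rw [expStar_coeff, Finset.smul_sum, Finset.sum_mul, Finset.smul_sum]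
    refine Finset.sum_congr rfl fun l hl => ?_
    rw [smul_smul, smul_mul_assoc, smul_smul, smul_smul, Nat.cast_choose ℝ hk']
    congr 1
    have := Nat.factorial_ne_zero n
    have := Nat.factorial_ne_zero k
    have := Nat.factorial_ne_zero (n - k)
    field_simp
  rw [Finset.sum_congr rfl h2, Finset.smul_sum]
  simp only [Finset.smul_sum]
  rw [Finset.sum_sigma', Finset.sum_sigma']
  refine Finset.sum_bij' (fun x _ => ⟨n - x.1 + x.2, x.2⟩) (fun x _ => ⟨n - (x.1 - x.2), x.2⟩)
    ?_ ?_ ?_ ?_ ?_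
  · rintro ⟨k, l⟩ h; simp at h ⊢; omega
  · rintro ⟨k, l⟩ h; simp at h ⊢; omega
  · rintro ⟨k, l⟩ h; simp at h ⊢; omega
  · rintro ⟨k, l⟩ h; simp at h ⊢; omega
  · rintro ⟨k, l⟩ h
    simp at h ⊢
    rw [show n - (n - k) = k by omega]

lemma coeff_pow_trunc (a : ℕ → MvPolynomial (Fin 2) ℝ) (h0 : a 0 = 0) (n s : ℕ) :
    PowerSeries.coeff n (PowerSeries.mk a ^ s) =
    PowerSeries.coeff n ((∑ i : Fin n, PowerSeries.C (a (i + 1)) * PowerSeries.X ^ ((i : ℕ) + 1)) ^ s) := by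
  have hd : (PowerSeries.X : PowerSeries (MvPolynomial (Fin 2) ℝ)) ^ (n + 1) ∣
      PowerSeries.mk a - ∑ i : Fin n, PowerSeries.C (a (i + 1)) * PowerSeries.X ^ ((i : ℕ) + 1) := by
    rw [PowerSeries.X_pow_dvd_iff]
    intro p hp
    rw [map_sub, PowerSeries.coeff_mk, map_sum,
      Fin.sum_univ_eq_sum_range (fun i => PowerSeries.coeff p (PowerSeries.C (a (i + 1)) * PowerSeries.X ^ (i + 1)))]
    simp only [PowerSeries.coeff_C_mul, PowerSeries.coeff_X_pow]
    rcases p with _ | p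
    · simp [h0]
    · have : p < n := by omega
      simp [this]
  have := (hd.trans (sub_dvd_pow_sub_pow _ _ s))
  rw [PowerSeries.X_pow_dvd_iff] at this
  have := this n (by omega)
  rwa [map_sub, sub_eq_zero] at this

lemma bell_expand (a : ℕ → MvPolynomial (Fin 2) ℝ) (h0 : a 0 = 0) (n : ℕ) :
    ∑ s ∈ Finset.range (n + 1), ((s.factorial : ℝ))⁻¹ • PowerSeries.coeff n (PowerSeries.mk a ^ s) =
    ∑ j ∈ bellIdx n, ∏ i : Fin n, ((j i).factorial : ℝ)⁻¹ • (a (i + 1) ^ j i) := by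
  have hmem : ∀ j : Fin n → ℕ, j ∈ bellIdx n ↔ ∑ i : Fin n, ((i : ℕ) + 1) * j i = n := by
    intro j
    simp only [bellIdx, Finset.mem_filter, Fintype.mem_piFinset, Finset.mem_range, and_iff_right_iff_imp]
    intro h i
    have : ((i : ℕ) + 1) * j i ≤ ∑ i : Fin n, ((i : ℕ) + 1) * j i :=
      Finset.single_le_sum (f := fun i : Fin n => ((i : ℕ) + 1) * j i) (fun _ _ => Nat.zero_le _) (Finset.mem_univ i)
    nlinarith
  have hmaps : ∀ j ∈ bellIdx n, ∑ i, j i ∈ Finset.range (n + 1) := by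
    intro j hj
    rw [hmem] at hj
    rw [Finset.mem_range, Nat.lt_succ_iff]
    calc ∑ i, j i ≤ ∑ i : Fin n, ((i : ℕ) + 1) * j i :=
          Finset.sum_le_sum fun i _ => by nlinarith [Nat.zero_le ((i : ℕ) * j i)]
      _ = n := hj
  rw [← Finset.sum_fiberwise_of_maps_to hmaps]
  refine Finset.sum_congr rfl fun s hs => ?_
  rw [coeff_pow_trunc a h0, Finset.sum_pow_eq_sum_piAntidiag, map_sum, Finset.smul_sum]
  have hset : (bellIdx n).filter (fun j => ∑ i, j i = s) =
      (Finset.piAntidiag Finset.univ s).filter (fun j : Fin n → ℕ => ∑ i : Fin n, ((i : ℕ) + 1) * j i = n) := by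
    ext j
    simp [hmem, and_comm]
  rw [hset, Finset.sum_filter]
  refine Finset.sum_congr rfl fun j hj => ?_
  have hj' : ∑ i, j i = s := by simpa using hj
  have e : ∏ i : Fin n, (PowerSeries.C (a (i + 1)) * PowerSeries.X ^ ((i : ℕ) + 1)) ^ j i =
      PowerSeries.C (∏ i : Fin n, a (i + 1) ^ j i) * PowerSeries.X ^ (∑ i : Fin n, ((i : ℕ) + 1) * j i) := by
    rw [map_prod, ← Finset.prod_pow_eq_pow_sum, ← Finset.prod_mul_distrib]
    refine Finset.prod_congr rfl fun i _ => ?_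
    rw [mul_pow, map_pow, pow_mul]
  rw [e, ← map_natCast (PowerSeries.C (R := MvPolynomial (Fin 2) ℝ)), PowerSeries.coeff_C_mul,
    PowerSeries.coeff_C_mul, PowerSeries.coeff_X_pow]
  by_cases h : ∑ i : Fin n, ((i : ℕ) + 1) * j i = n
  · rw [if_pos h, if_pos h.symm, mul_one]
    have e2 : (Nat.multinomial Finset.univ j : MvPolynomial (Fin 2) ℝ) =
      algebraMap ℝ _ (Nat.multinomial Finset.univ j : ℝ) := by simp
    rw [e2, ← Algebra.smul_def, smul_smul]
    have e3 : ∏ i : Fin n, ((j i).factorial : ℝ)⁻¹ • (a (i + 1) ^ j i) =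
        (∏ i : Fin n, ((j i).factorial : ℝ)⁻¹) • ∏ i : Fin n, (a (i + 1) ^ j i) := by
      simp only [Algebra.smul_def, Finset.prod_mul_distrib, map_prod]
    rw [e3]
    congr 1
    have e4 := Nat.multinomial_spec Finset.univ j
    rw [hj'] at e4
    rw [← e4, Finset.prod_inv_distrib]
    push_cast
    have h1 : (∏ i : Fin n, ((j i).factorial : ℝ)) ≠ 0 :=
      Finset.prod_ne_zero_iff.2 fun i _ => by exact_mod_cast Nat.factorial_ne_zero _
    have h2 : (Nat.multinomial Finset.univ j : ℝ) ≠ 0 := by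
      intro h
      have h' : Nat.multinomial Finset.univ j = 0 := by exact_mod_cast h
      rw [h', mul_zero] at e4
      exact Nat.factorial_ne_zero _ e4.symm
    field_simp
  · rw [if_neg h, if_neg (Ne.symm h)]; simp

end WickAux

/-- Let `m ≥ 2`, let `σ_2,…,σ_m` be reals extended by `σ_p = 0` for `p > m`, let `κ` be
the linear map with `κ(1) = κ(X) = 0` and `κ(X^p) = σ_p Y` for `p ≥ 2`, and let
`W = (exp_∗(−κ) ⊗ id)Δ` be the associated Wick map. Then for every `n ≥ 2`,
`W(X^n) = B_n(X, −σ_2 Y, …, −σ_n Y)`, i.e.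
`W(X^n) = n! Σ_{j_1+2j_2+⋯+nj_n=n} (X^{j_1}/j_1!) ∏_{p=2}^n (1/j_p!)(−σ_p Y/p!)^{j_p}`. -/
theorem stmt_18 (m : ℕ) (hm : 2 ≤ m) (σ : ℕ → ℝ) (hσ : ∀ p : ℕ, m < p → σ p = 0)
    (κ : Polynomial ℝ →ₗ[ℝ] MvPolynomial (Fin 2) ℝ)
    (hκ : ∀ p : ℕ, κ (X ^ p) = if 2 ≤ p then σ p • Yv else 0) :
    ∀ (n : ℕ) (hn2 : 2 ≤ n),
      ∑ k ∈ Finset.range (n + 1),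
          (n.choose k : ℝ) • (expStarA (-κ) (X ^ k) * Xv ^ (n - k)) =
      (n.factorial : ℝ) •
        ∑ j ∈ bellIdx n,
          ((((j (⟨0, by omega⟩ : Fin n)).factorial : ℝ))⁻¹ •
              Xv ^ (j (⟨0, by omega⟩ : Fin n))) *
            ∏ i : Fin n,
              (if (i : ℕ) = 0 then (1 : MvPolynomial (Fin 2) ℝ) else
                (((j i).factorial : ℝ))⁻¹ •
                  (((-(σ ((i : ℕ) + 1)) / ((((i : ℕ) + 1).factorial : ℝ))) • Yv) ^ (j i))) := by
  intro n hn2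
  rw [wick_lhs]
  congr 1
  let a : ℕ → MvPolynomial (Fin 2) ℝ := fun p =>
    if p = 1 then Xv else if 2 ≤ p then (-(σ p) / (p.factorial : ℝ)) • Yv else 0
  have hG : egs (-κ) + PowerSeries.C Xv * PowerSeries.X = PowerSeries.mk a := by
    ext1 p
    rw [map_add, PowerSeries.coeff_C_mul, PowerSeries.coeff_X, egs, PowerSeries.coeff_mk,
      PowerSeries.coeff_mk, LinearMap.neg_apply, hκ]
    simp only [a]
    by_cases h1 : p = 1
    · subst h1; simp
    · by_cases h2 : 2 ≤ p
      · rw [if_neg h1, if_neg h1, if_pos h2, if_pos h2, mul_zero, add_zero, ← neg_smul, smul_smul]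
        congr 1
        ring
      · simp [h1, h2]
  rw [hG, bell_expand a (by simp [a])]
  refine Finset.sum_congr rfl fun j _ => ?_
  obtain ⟨n, rfl⟩ : ∃ n', n = n' + 1 := ⟨n - 1, by omega⟩
  rw [Fin.prod_univ_succ, Fin.prod_univ_succ]
  simp [a]
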